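/- Let U ⊆ ℂ² be open, F : U → ℂ holomorphic, ω = (P,Q) a holomorphic 1-form on U, and let ℓ ≥ 0. Let (g_i, r_i), 1 ≤ i ≤ ℓ+1, be a Françoise sequence of order ℓ+1 for dF + εω with g_{ℓ+1} = 0. For ε ∈ ℂ define G_ε = Σ_{i=0}^{ℓ} (−1)^i ε^i g_i and F_ε = F + Σ_{i=1}^{ℓ+1} (−1)^{i+1} ε^i r_i. Then for every ε ∈ ℂ the exact identities ∂F_ε/∂x = G_ε·(∂F/∂x + εP) and ∂F_ε/∂y = G_ε·(∂F/∂y + εQ) hold on U; that is, F_ε is a first integral of the foliation dF + εω = 0 with integrating factor G_ε. -/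

import Mathlib

/-!
At a fixed point the recursion `g_{i-1} ω = g_i dF + dr_i` turns `dF + Σ_{i ≤ n} (-1)^{i+1} ε^i dr_i`
into a telescoping sum equal to `(Σ_{i < n} (-1)^i ε^i g_i) (dF + ε ω) + (-1)^n ε^n g_n dF`
(`francoise_telescope`). For `n = ℓ + 1` the remainder vanishes since `g_{ℓ+1} = 0`, and linearity of
the derivative (`fderiv_deformed_integral`) identifies the left-hand side with `dF_ε`.
-/

/-- ∂/∂x of a function on ℂ². -/
noncomputable def pdx (f : ℂ × ℂ → ℂ) (p : ℂ × ℂ) : ℂ := fderiv ℂ f p (1, 0)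

/-- ∂/∂y of a function on ℂ². -/
noncomputable def pdy (f : ℂ × ℂ → ℂ) (p : ℂ × ℂ) : ℂ := fderiv ℂ f p (0, 1)

/-- Pointwise form of the telescoping identity: `a`, `b`, `γ i`, `ρ i` are the values at a point of
one component of `dF`, `ω`, of `g_i`, and of the same component of `dr_i`. The last summand is the
remainder of the truncation at order `n`. -/
lemma francoise_telescope (ε a b : ℂ) (γ ρ : ℕ → ℂ) (h0 : γ 0 = 1) (n : ℕ)
    (h : ∀ i, 1 ≤ i → i ≤ n → γ (i - 1) * b = γ i * a + ρ i) :
    a + ∑ i ∈ Finset.Icc 1 n, (-1 : ℂ) ^ (i + 1) * ε ^ i * ρ i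
      = (∑ i ∈ Finset.range n, (-1 : ℂ) ^ i * ε ^ i * γ i) * (a + ε * b)
        + (-1 : ℂ) ^ n * ε ^ n * γ n * a := by
  induction n with
  | zero => simp [h0]
  | succ n ih =>
    have hn := h (n + 1) (by omega) le_rfl
    rw [Nat.add_sub_cancel] at hn
    rw [Finset.sum_Icc_succ_top (by omega), Finset.sum_range_succ, ← add_assoc,
      ih fun i h1 h2 => h i h1 (by omega)]
    linear_combination (-(-1 : ℂ) ^ n * ε ^ (n + 1)) * hn

lemma fderiv_deformed_integral (ε : ℂ) (n : ℕ) (F : ℂ × ℂ → ℂ) (r : ℕ → ℂ × ℂ → ℂ) (p v : ℂ × ℂ)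
    (hF : DifferentiableAt ℂ F p)
    (hr : ∀ i, 1 ≤ i → i ≤ n → DifferentiableAt ℂ (r i) p) :
    fderiv ℂ (fun q => F q + ∑ i ∈ Finset.Icc 1 n, (-1 : ℂ) ^ (i + 1) * ε ^ i * r i q) p v
      = fderiv ℂ F p v
        + ∑ i ∈ Finset.Icc 1 n, (-1 : ℂ) ^ (i + 1) * ε ^ i * fderiv ℂ (r i) p v := by
  have h := hF.hasFDerivAt.fun_add (HasFDerivAt.fun_sum (u := Finset.Icc 1 n) fun i hi =>
    ((hr i (Finset.mem_Icc.1 hi).1 (Finset.mem_Icc.1 hi).2).hasFDerivAt.const_mul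
      ((-1 : ℂ) ^ (i + 1) * ε ^ i)))
  rw [h.fderiv]
  simp

/-- Core of Theorem 8: if (g_i, r_i), 1 ≤ i ≤ ℓ+1, is a Françoise sequence for
dF + εω with g_{ℓ+1} = 0 (length ℓ), then for every ε the function
F_ε = F + Σ_{i=1}^{ℓ+1} (−1)^{i+1} ε^i r_i is a first integral of dF + εω = 0 with
integrating factor G_ε = Σ_{i=0}^{ℓ} (−1)^i ε^i g_i, i.e. dF_ε = G_ε·(dF + εω). -/
theorem finite_francoise_gives_first_integral
    (U : Set (ℂ × ℂ)) (hU : IsOpen U) (ℓ : ℕ)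
    (F P Q : ℂ × ℂ → ℂ) (g r : ℕ → ℂ × ℂ → ℂ)
    (hF : DifferentiableOn ℂ F U)
    (hP : DifferentiableOn ℂ P U) (hQ : DifferentiableOn ℂ Q U)
    (hg0 : ∀ p, g 0 p = 1)
    (hgd : ∀ i ≤ ℓ + 1, DifferentiableOn ℂ (g i) U)
    (hrd : ∀ i, 1 ≤ i → i ≤ ℓ + 1 → DifferentiableOn ℂ (r i) U)
    (hFr : ∀ i, 1 ≤ i → i ≤ ℓ + 1 → ∀ p ∈ U,
      g (i - 1) p * P p = g i p * pdx F p + pdx (r i) p ∧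
      g (i - 1) p * Q p = g i p * pdy F p + pdy (r i) p)
    (hlen : ∀ p ∈ U, g (ℓ + 1) p = 0) :
    ∀ ε : ℂ, ∀ p ∈ U,
      pdx (fun q => F q + ∑ i ∈ Finset.Icc 1 (ℓ + 1), (-1 : ℂ) ^ (i + 1) * ε ^ i * r i q) p
        = (∑ i ∈ Finset.range (ℓ + 1), (-1 : ℂ) ^ i * ε ^ i * g i p) *
            (pdx F p + ε * P p) ∧
      pdy (fun q => F q + ∑ i ∈ Finset.Icc 1 (ℓ + 1), (-1 : ℂ) ^ (i + 1) * ε ^ i * r i q) p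
        = (∑ i ∈ Finset.range (ℓ + 1), (-1 : ℂ) ^ i * ε ^ i * g i p) *
            (pdy F p + ε * Q p) := by
  intro ε p hp
  have hUp := hU.mem_nhds hp
  have hFp := hF.differentiableAt hUp
  have hrp : ∀ i, 1 ≤ i → i ≤ ℓ + 1 → DifferentiableAt ℂ (r i) p :=
    fun i h1 h2 => (hrd i h1 h2).differentiableAt hUp
  constructor
  · have key := francoise_telescope ε (pdx F p) (P p) (fun i => g i p) (fun i => pdx (r i) p)
      (hg0 p) (ℓ + 1) fun i h1 h2 => (hFr i h1 h2 p hp).1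
    rw [hlen p hp, mul_zero, zero_mul, add_zero] at key
    exact (fderiv_deformed_integral ε (ℓ + 1) F r p (1, 0) hFp hrp).trans key
  · have key := francoise_telescope ε (pdy F p) (Q p) (fun i => g i p) (fun i => pdy (r i) p)
      (hg0 p) (ℓ + 1) fun i h1 h2 => (hFr i h1 h2 p hp).2
    rw [hlen p hp, mul_zero, zero_mul, add_zero] at key
    exact (fderiv_deformed_integral ε (ℓ + 1) F r p (0, 1) hFp hrp).trans key
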